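/- Let n ≥ 1 and let T_1, …, T_n be pairwise commuting contractions on a complex Hilbert space H. If there exists a nonzero vector e ∈ H such that T_i e = 0 and T_i* e = 0 for every i = 1, …, n (i.e., e lies in the intersection of the joint kernel of the T_i with the orthogonal complement of the closed span of the ranges of the T_i), then (T_1, …, T_n) is not extremal. -/

import Mathlib

open ContinuousLinearMap in
/-- The block operator `X (h, m) = (T h + A m, B m)` on the Hilbert direct sum `H ⊕₂ M`. -/
noncomputable def blockOp {H M : Type*} [NormedAddCommGroup H] [InnerProductSpace ℂ H]
    [NormedAddCommGroup M] [InnerProductSpace ℂ M]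
    (T : H →L[ℂ] H) (A : M →L[ℂ] H) (B : M →L[ℂ] M) :
    WithLp 2 (H × M) →L[ℂ] WithLp 2 (H × M) :=
  ((WithLp.prodContinuousLinearEquiv 2 ℂ H M).symm : H × M →L[ℂ] WithLp 2 (H × M)) ∘L
    ((T ∘L fst ℂ H M + A ∘L snd ℂ H M).prod (B ∘L snd ℂ H M)) ∘L
    ((WithLp.prodContinuousLinearEquiv 2 ℂ H M) : WithLp 2 (H × M) →L[ℂ] H × M)

/-- A tuple of commuting contractions is extremal if every block extension
`X_i (h, m) = (T_i h + A_i m, B_i m)` by commuting contractions has `A_i = 0` for all `i`. -/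
def IsExtremal {n : ℕ} {H : Type*} [NormedAddCommGroup H] [InnerProductSpace ℂ H]
    [CompleteSpace H] (T : Fin n → H →L[ℂ] H) : Prop :=
  ∀ (M : Type*) [NormedAddCommGroup M] [InnerProductSpace ℂ M] [CompleteSpace M],
    ∀ (A : Fin n → M →L[ℂ] H) (B : Fin n → M →L[ℂ] M),
      (∀ i, ‖blockOp (T i) (A i) (B i)‖ ≤ 1) →
      (∀ i j, blockOp (T i) (A i) (B i) ∘L blockOp (T j) (A j) (B j)
            = blockOp (T j) (A j) (B j) ∘L blockOp (T i) (A i) (B i)) →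
      ∀ i, A i = 0

/-- If `T_1, …, T_n` are commuting contractions on a Hilbert space `H` and some nonzero
`e ∈ H` satisfies `T_i e = 0` and `T_i⋆ e = 0` for every `i`, then `T` is not extremal. -/
theorem statement0 {H : Type*} [NormedAddCommGroup H] [InnerProductSpace ℂ H] [CompleteSpace H]
    {n : ℕ} (hn : 1 ≤ n) (T : Fin n → H →L[ℂ] H)
    (hcontr : ∀ i, ‖T i‖ ≤ 1)
    (hcomm : ∀ i j, T i ∘L T j = T j ∘L T i)
    (e : H) (he : e ≠ 0)
    (hker : ∀ i, T i e = 0)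
    (hker' : ∀ i, ContinuousLinearMap.adjoint (T i) e = 0) :
    ¬ IsExtremal T := by
  intro h
  have hepos : ‖e‖ ≠ 0 := norm_ne_zero_iff.mpr he
  set u : H := ((‖e‖ : ℂ)⁻¹) • e with hu
  have hu1 : ‖u‖ = 1 := by
    rw [hu, norm_smul, norm_inv, Complex.norm_real, norm_norm]
    exact inv_mul_cancel₀ hepos
  have hTu : ∀ i, T i u = 0 := fun i => by rw [hu, map_smul, hker, smul_zero]
  have horth : ∀ i x, inner ℂ (T i x) u = 0 := fun i x => by
    rw [← ContinuousLinearMap.adjoint_inner_right, hu, map_smul, hker', smul_zero, inner_zero_right]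
  let A : EuclideanSpace ℂ PUnit →L[ℂ] H :=
    (EuclideanSpace.proj PUnit.unit : EuclideanSpace ℂ PUnit →L[ℂ] ℂ).smulRight u
  have hA : ∀ m, A m = m PUnit.unit • u := fun m => rfl
  have hb : ∀ i x, blockOp (T i) A 0 x
      = WithLp.toLp 2 (T i x.fst + A x.snd, (0 : EuclideanSpace ℂ PUnit)) := fun i x => rfl
  have key := h (EuclideanSpace ℂ PUnit) (fun _ => A) (fun _ => 0) ?_ ?_ ⟨0, hn⟩
  · have h1 : A (WithLp.toLp 2 (fun _ => (1 : ℂ))) = 0 := by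
      have : A = 0 := key
      rw [this]; rfl
    rw [hA] at h1
    simp only [one_smul] at h1
    rw [h1, norm_zero] at hu1
    exact zero_ne_one hu1
  · intro i
    refine ContinuousLinearMap.opNorm_le_bound _ zero_le_one fun x => ?_
    rw [one_mul]
    refine (sq_le_sq₀ (norm_nonneg _) (norm_nonneg _)).mp ?_
    rw [hb, WithLp.prod_norm_sq_eq_of_L2, WithLp.prod_norm_sq_eq_of_L2]
    have h2 : ‖T i x.fst + A x.snd‖ ^ 2 = ‖T i x.fst‖ ^ 2 + ‖A x.snd‖ ^ 2 := by
      have := norm_add_sq_eq_norm_sq_add_norm_sq_of_inner_eq_zero (𝕜 := ℂ) (T i x.fst) (A x.snd)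
        (by rw [hA, inner_smul_right, horth, mul_zero])
      simpa [sq] using this
    have h3 : ‖A x.snd‖ ^ 2 = ‖x.snd‖ ^ 2 := by
      rw [hA, norm_smul, hu1, mul_one, EuclideanSpace.norm_sq_eq]
      simp
    have h4 : ‖T i x.fst‖ ≤ ‖x.fst‖ := by
      simpa using (T i).le_of_opNorm_le (hcontr i) x.fst
    have h5 : ‖T i x.fst‖ ^ 2 ≤ ‖x.fst‖ ^ 2 := by gcongr
    have h7 : ‖(0 : EuclideanSpace ℂ PUnit)‖ ^ 2 = 0 := by simp
    change ‖T i x.fst + A x.snd‖ ^ 2 + ‖(0 : EuclideanSpace ℂ PUnit)‖ ^ 2 ≤ _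
    rw [h2, h3, h7]
    linarith
  · intro i j
    ext1 x
    simp only [ContinuousLinearMap.comp_apply, hb]
    have h6 : T i (T j x.fst) = T j (T i x.fst) := DFunLike.congr_fun (hcomm i j) x.fst
    simp [hA, hTu, h6]
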